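/- Let H be a real Hilbert space, Ψ : H → ℝ ∪ {+∞} proper, lower-semicontinuous and convex, and Φ : H → ℝ convex and continuously differentiable with L-Lipschitz continuous gradient. Suppose x* ∈ argmin(Ψ + Φ), and let (x_k) be generated by the accelerated forward-backward algorithm with parameter α > 3 and step size 0 < s < 1/L. Then for every k ≥ 1, ‖x_{k+1} − x*‖² ≤ ‖x_k − x*‖² + 2‖x_k − x_{k−1}‖² + ((k−1)/(k+α−1)) ( ‖x_k − x*‖² − ‖x_{k−1} − x*‖² ). -/

import Mathlib

open Filter RealInnerProductSpace

/-!
One forward-backward step does not increase the distance to a minimizer. The quadratic upper bound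
and the linear lower bound for `Φ` at `w`, added to the quadratic growth of the proximal objective
around its minimizer `p`, give for every `u` the inequality
`Θ p + ‖p - u‖ ^ 2 / (2 * s) ≤ Θ u + ‖w - u‖ ^ 2 / (2 * s)` with `Θ = Ψ + Φ`;
at a minimizer `u` of `Θ` it reduces to `‖p - u‖ ≤ ‖w - u‖`. For the extrapolated point
`w = a + γ • (a - b)`, expanding `‖w - u‖ ^ 2` gives the claimed right-hand side with `γ + γ ^ 2`
in place of the factor `2`, and `γ ∈ [0, 1]`.
-/

section QuadraticGrowth

variable {E : Type*} [NormedAddCommGroup E] {D : Set E}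

theorem add_modulus_le_of_uniformConvexOn_of_isMinOn [NormedSpace ℝ E] {φ : ℝ → ℝ} {f : E → ℝ}
    {p u : E} (hf : UniformConvexOn D φ f) (hp : p ∈ D) (hmin : IsMinOn f D p) (hu : u ∈ D) :
    f p + φ ‖p - u‖ ≤ f u := by
  have growth_on_segment : ∀ t ∈ Set.Ioo (0 : ℝ) 1, f p + (1 - t) * φ ‖p - u‖ ≤ f u := by
    intro t ht
    have ht' : 0 ≤ 1 - t := sub_nonneg.2 ht.2.le
    have hle : f p ≤ f ((1 - t) • p + t • u) :=
      hmin (hf.1 hp hu ht' ht.1.le (sub_add_cancel 1 t))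
    have hconv := hf.2 hp hu ht' ht.1.le (sub_add_cancel 1 t)
    simp only [smul_eq_mul] at hconv
    refine le_of_mul_le_mul_left ?_ ht.1
    linarith
  have hlim : Tendsto (fun t : ℝ => f p + (1 - t) * φ ‖p - u‖) (nhdsWithin 0 (Set.Ioi 0))
      (nhds (f p + φ ‖p - u‖)) := by
    have hcont : Continuous fun t : ℝ => f p + (1 - t) * φ ‖p - u‖ := by fun_prop
    simpa using (hcont.tendsto 0).mono_left nhdsWithin_le_nhds
  exact le_of_tendsto hlim
    (eventually_of_mem (Ioo_mem_nhdsGT zero_lt_one) growth_on_segment)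

variable [InnerProductSpace ℝ E]

theorem strongConvexOn_add_mul_sq_norm_sub {ψ : E → ℝ} (hψ : ConvexOn ℝ D ψ) (m : ℝ) (v : E) :
    StrongConvexOn D m fun u => ψ u + m / 2 * ‖u - v‖ ^ 2 := by
  refine ⟨hψ.1, fun a ha b hb p q hp hq hpq => ?_⟩
  have hquad : ‖p • a + q • b - v‖ ^ 2 =
      p * ‖a - v‖ ^ 2 + q * ‖b - v‖ ^ 2 - p * q * ‖a - b‖ ^ 2 := by
    obtain rfl : q = 1 - p := by linarith
    have hcomb : p • a + (1 - p) • b - v = p • (a - v) + (1 - p) • (b - v) := by module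
    have hsub : a - b = (a - v) - (b - v) := by abel
    rw [hcomb, hsub, norm_add_sq_real, norm_sub_sq_real (a - v), norm_smul, norm_smul, mul_pow,
      mul_pow, real_inner_smul_left, real_inner_smul_right, Real.norm_eq_abs, Real.norm_eq_abs,
      sq_abs, sq_abs]
    ring
  have hconv := hψ.2 ha hb hp hq hpq
  simp only [smul_eq_mul] at hconv ⊢
  rw [hquad]
  linarith

theorem proximal_three_point_inequality {ψ : E → ℝ} {s : ℝ} {v p u : E} (hψ : ConvexOn ℝ D ψ)
    (hp : p ∈ D) (hmin : IsMinOn (fun z => ψ z + 1 / (2 * s) * ‖z - v‖ ^ 2) D p) (hu : u ∈ D) :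
    ψ p + 1 / (2 * s) * ‖p - v‖ ^ 2 + 1 / (2 * s) * ‖p - u‖ ^ 2 ≤
      ψ u + 1 / (2 * s) * ‖u - v‖ ^ 2 := by
  have hm : 1 / s / 2 = 1 / (2 * s) := by rw [div_div, mul_comm]
  have hstrong := strongConvexOn_add_mul_sq_norm_sub hψ (1 / s) v
  simp only [StrongConvexOn, hm] at hstrong
  exact add_modulus_le_of_uniformConvexOn_of_isMinOn hstrong hp hmin hu

end QuadraticGrowth

section FirstOrderBounds

open AffineMap

variable {E : Type*} [NormedAddCommGroup E] [NormedSpace ℝ E] {S : Set E} {f : E → ℝ} {x y : E}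

theorem hasDerivWithinAt_comp_lineMap {f' : StrongDual ℝ E} {t : ℝ} (hS : Convex ℝ S)
    (hx : x ∈ S) (hy : y ∈ S) (hf : HasFDerivWithinAt f f' S (lineMap x y t)) :
    HasDerivWithinAt (f ∘ lineMap x y) (f' (y - x)) (Set.Icc (0 : ℝ) 1) t :=
  hf.comp_hasDerivWithinAt t hasDerivWithinAt_lineMap (hS.mapsTo_lineMap hx hy)

theorem add_fderivWithin_le_of_convexOn {f' : StrongDual ℝ E} (hconv : ConvexOn ℝ S f)
    (hf : HasFDerivWithinAt f f' S x) (hx : x ∈ S) (hy : y ∈ S) :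
    f x + f' (y - x) ≤ f y := by
  have hline : ConvexOn ℝ (Set.Icc (0 : ℝ) 1) (f ∘ lineMap x y) :=
    (hconv.comp_affineMap (lineMap x y)).subset (hconv.1.mapsTo_lineMap hx hy) (convex_Icc 0 1)
  have hderiv : HasDerivWithinAt (f ∘ lineMap x y) (f' (y - x)) (Set.Icc (0 : ℝ) 1) 0 :=
    hasDerivWithinAt_comp_lineMap hconv.1 hx hy (by rwa [lineMap_apply_zero])
  have hslope := hline.le_slope_of_hasDerivWithinAt (Set.left_mem_Icc.2 zero_le_one)
    (Set.right_mem_Icc.2 zero_le_one) zero_lt_one hderiv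
  simp only [slope_def_field, Function.comp_apply, lineMap_apply_one, lineMap_apply_zero, sub_zero,
    div_one] at hslope
  linarith

theorem le_add_fderivWithin_add_sq_norm_of_lipschitzOnWith {f' : E → StrongDual ℝ E} {L : NNReal}
    (hS : Convex ℝ S) (hf : ∀ z ∈ S, HasFDerivWithinAt f (f' z) S z) (hL : LipschitzOnWith L f' S)
    (hx : x ∈ S) (hy : y ∈ S) :
    f y ≤ f x + f' x (y - x) + L / 2 * ‖y - x‖ ^ 2 := by
  have hderiv : ∀ t ∈ Set.Icc (0 : ℝ) 1, HasDerivWithinAt (f ∘ lineMap x y)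
      (f' (lineMap x y t) (y - x)) (Set.Icc 0 1) t := fun t ht =>
    hasDerivWithinAt_comp_lineMap hS hx hy (hf _ (hS.lineMap_mem hx hy ht))
  have hbound_deriv : ∀ t : ℝ, HasDerivAt
      (fun r => f x + r * f' x (y - x) + r ^ 2 * (L / 2 * ‖y - x‖ ^ 2))
      (f' x (y - x) + L * t * ‖y - x‖ ^ 2) t := by
    intro t
    have hlin := ((hasDerivAt_id t).mul_const (f' x (y - x))).const_add (f x)
    have hquad := (hasDerivAt_pow 2 t).mul_const ((L : ℝ) / 2 * ‖y - x‖ ^ 2)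
    exact (hlin.add hquad).congr_deriv (by push_cast; ring)
  have hderiv_le : ∀ t ∈ Set.Ico (0 : ℝ) 1,
      f' (lineMap x y t) (y - x) ≤ f' x (y - x) + L * t * ‖y - x‖ ^ 2 := by
    intro t ht
    have hlip : ‖f' (lineMap x y t) - f' x‖ ≤ L * (t * ‖y - x‖) := by
      refine (hL.norm_sub_le (hS.lineMap_mem hx hy (Set.Ico_subset_Icc_self ht)) hx).trans_eq ?_
      rw [lineMap_apply_module', add_sub_cancel_right, norm_smul, Real.norm_of_nonneg ht.1]
    have happly := (le_abs_self _).trans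
      ((f' (lineMap x y t) - f' x).le_of_opNorm_le hlip (y - x))
    rw [sub_apply] at happly
    linarith
  have hle := image_le_of_deriv_right_le_deriv_boundary
    (fun t ht => (hderiv t ht).continuousWithinAt)
    (fun t ht => (hderiv t (Set.Ico_subset_Icc_self ht)).mono_of_mem_nhdsWithin
      (Icc_mem_nhdsGE_of_mem ht))
    (by simp) (fun t _ => (hbound_deriv t).continuousAt.continuousWithinAt)
    (fun t _ => (hbound_deriv t).hasDerivWithinAt) hderiv_le (Set.right_mem_Icc.2 zero_le_one)
  simpa using hle

end FirstOrderBounds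

section ForwardBackward

variable {H : Type*} [NormedAddCommGroup H] [InnerProductSpace ℝ H] [CompleteSpace H]
  {D : Set H} {ψ Φ : H → ℝ} {Φ' : H → H} {L : NNReal} {s : ℝ} {w p : H}

theorem forwardBackward_inequality (hψ : ConvexOn ℝ D ψ) (hΦ : ConvexOn ℝ Set.univ Φ)
    (hΦ' : ∀ u, HasGradientAt Φ (Φ' u) u) (hL : LipschitzWith L Φ') (hs : 0 < s) (hsL : s * L ≤ 1)
    (hp : p ∈ D)
    (hmin : IsMinOn (fun z => ψ z + 1 / (2 * s) * ‖z - (w - s • Φ' w)‖ ^ 2) D p)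
    {u : H} (hu : u ∈ D) :
    ψ p + Φ p + 1 / (2 * s) * ‖p - u‖ ^ 2 ≤ ψ u + Φ u + 1 / (2 * s) * ‖w - u‖ ^ 2 := by
  have upper : Φ p ≤ Φ w + ⟪Φ' w, p - w⟫ + L / 2 * ‖p - w‖ ^ 2 := by
    have hdual : LipschitzWith L fun z => InnerProductSpace.toDual ℝ H (Φ' z) := by
      simpa only [one_mul] using! (InnerProductSpace.toDual ℝ H).lipschitz.comp hL
    exact le_add_fderivWithin_add_sq_norm_of_lipschitzOnWith convex_univ
      (fun z _ => (hΦ' z).hasFDerivAt.hasFDerivWithinAt) hdual.lipschitzOnWith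
      (Set.mem_univ w) (Set.mem_univ p)
  have lower : Φ w + ⟪Φ' w, u - w⟫ ≤ Φ u :=
    add_fderivWithin_le_of_convexOn hΦ (hΦ' w).hasFDerivAt.hasFDerivWithinAt
      (Set.mem_univ w) (Set.mem_univ u)
  have curvature : (L : ℝ) / 2 * ‖p - w‖ ^ 2 ≤ 1 / (2 * s) * ‖p - w‖ ^ 2 := by
    refine mul_le_mul_of_nonneg_right ?_ (sq_nonneg _)
    rw [div_le_div_iff₀ two_pos (by positivity)]
    linarith
  have hexpand : ∀ z, 1 / (2 * s) * ‖z - (w - s • Φ' w)‖ ^ 2 =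
      1 / (2 * s) * ‖z - w‖ ^ 2 + ⟪Φ' w, z - w⟫ + s / 2 * ‖Φ' w‖ ^ 2 := by
    intro z
    rw [← sub_add, norm_add_sq_real, norm_smul, mul_pow, Real.norm_eq_abs, sq_abs,
      real_inner_smul_right, real_inner_comm]
    field_simp
  have three_point := proximal_three_point_inequality hψ hp hmin hu
  rw [hexpand, hexpand, norm_sub_rev u w] at three_point
  linarith

theorem forwardBackward_norm_sub_minimizer_le (hψ : ConvexOn ℝ D ψ) (hΦ : ConvexOn ℝ Set.univ Φ)
    (hΦ' : ∀ u, HasGradientAt Φ (Φ' u) u) (hL : LipschitzWith L Φ') (hs : 0 < s) (hsL : s * L ≤ 1)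
    (hp : p ∈ D)
    (hmin : IsMinOn (fun z => ψ z + 1 / (2 * s) * ‖z - (w - s • Φ' w)‖ ^ 2) D p)
    {z : H} (hz : z ∈ D) (hz_min : IsMinOn (fun u => ψ u + Φ u) D z) :
    ‖p - z‖ ≤ ‖w - z‖ := by
  have hstep := forwardBackward_inequality hψ hΦ hΦ' hL hs hsL hp hmin hz
  have hvalue : ψ z + Φ z ≤ ψ p + Φ p := hz_min hp
  have hsq : 1 / (2 * s) * ‖p - z‖ ^ 2 ≤ 1 / (2 * s) * ‖w - z‖ ^ 2 := by linarith
  exact le_of_sq_le_sq (le_of_mul_le_mul_left hsq (by positivity)) (norm_nonneg _)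

end ForwardBackward

section Extrapolation

theorem norm_extrapolation_sub_sq {E : Type*} [NormedAddCommGroup E] [InnerProductSpace ℝ E]
    (γ : ℝ) (a b z : E) :
    ‖a + γ • (a - b) - z‖ ^ 2 =
      ‖a - z‖ ^ 2 + (γ + γ ^ 2) * ‖a - b‖ ^ 2 + γ * (‖a - z‖ ^ 2 - ‖b - z‖ ^ 2) := by
  have hextra : a + γ • (a - b) - z = (a - z) + γ • (a - b) := by module
  have hb : b - z = (a - z) - (a - b) := by abel
  rw [hextra, hb, norm_add_sq_real, norm_sub_sq_real (a - z), norm_smul, mul_pow, Real.norm_eq_abs,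
    sq_abs, real_inner_smul_right]
  ring

theorem inertial_coefficient_mem_Icc {α r : ℝ} (hα : 0 ≤ α) (hr : 1 ≤ r) :
    (r - 1) / (r + α - 1) ∈ Set.Icc (0 : ℝ) 1 :=
  ⟨div_nonneg (by linarith) (by linarith), div_le_one_of_le₀ (by linarith) (by linarith)⟩

end Extrapolation

section ExtendedReal

/-- The effective domain of a function with values in `ℝ ∪ {+∞}`: the set where it is not `+∞`.
On it, `u ↦ (Ψ u).toReal` is the real-valued restriction of `Ψ`. -/
def effectiveDomain {X : Type*} (Ψ : X → EReal) : Set X :=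
  {u | Ψ u ≠ ⊤}

theorem mem_effectiveDomain_of_forall_add_coe_le {X : Type*} {Ψ : X → EReal} {c : X → ℝ} {p : X}
    (hproper : ∃ u, Ψ u ≠ ⊤) (hmin : ∀ u, Ψ p + (c p : EReal) ≤ Ψ u + (c u : EReal)) :
    p ∈ effectiveDomain Ψ := by
  obtain ⟨u, hu⟩ := hproper
  intro hp
  have htop := hmin u
  rw [hp, EReal.top_add_coe, top_le_iff] at htop
  exact EReal.add_ne_top hu (EReal.coe_ne_top _) htop

theorem isMinOn_effectiveDomain_of_forall_add_coe_le {X : Type*} {Ψ : X → EReal} {c : X → ℝ}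
    {p : X} (hbot : ∀ u, Ψ u ≠ ⊥) (hp : p ∈ effectiveDomain Ψ)
    (hmin : ∀ u, Ψ p + (c p : EReal) ≤ Ψ u + (c u : EReal)) :
    IsMinOn (fun u => (Ψ u).toReal + c u) (effectiveDomain Ψ) p := by
  intro u hu
  have hle := hmin u
  rw [← EReal.coe_toReal hp (hbot p), ← EReal.coe_toReal hu (hbot u)] at hle
  exact_mod_cast hle

theorem convexOn_toReal_effectiveDomain {E : Type*} [AddCommGroup E] [Module ℝ E] {Ψ : E → EReal}
    (hbot : ∀ u, Ψ u ≠ ⊥)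
    (hconv : ∀ u v : E, ∀ a b : ℝ, 0 ≤ a → 0 ≤ b → a + b = 1 →
      Ψ (a • u + b • v) ≤ (a : EReal) * Ψ u + (b : EReal) * Ψ v) :
    ConvexOn ℝ (effectiveDomain Ψ) fun u => (Ψ u).toReal := by
  have hcomb : ∀ u ∈ effectiveDomain Ψ, ∀ v ∈ effectiveDomain Ψ, ∀ a b : ℝ, 0 ≤ a → 0 ≤ b →
      a + b = 1 → Ψ (a • u + b • v) ≤ ((a * (Ψ u).toReal + b * (Ψ v).toReal : ℝ) : EReal) := by
    intro u hu v hv a b ha hb hab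
    have hle := hconv u v a b ha hb hab
    rw [← EReal.coe_toReal hu (hbot u), ← EReal.coe_toReal hv (hbot v)] at hle
    exact_mod_cast hle
  refine ⟨fun u hu v hv a b ha hb hab => ?_, fun u hu v hv a b ha hb hab => ?_⟩
  · exact ne_top_of_le_ne_top (EReal.coe_ne_top _) (hcomb u hu v hv a b ha hb hab)
  · exact EReal.toReal_le_toReal (hcomb u hu v hv a b ha hb hab) (hbot _) (EReal.coe_ne_top _)

end ExtendedReal

theorem fista_anchor_inequality_general
    {H : Type*} [NormedAddCommGroup H] [InnerProductSpace ℝ H] [CompleteSpace H]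
    {Ψ : H → EReal} {Φ : H → ℝ} {Φ' : H → H} {L : NNReal} {s α : ℝ}
    (hΨ_ne_bot : ∀ u, Ψ u ≠ ⊥) (hΨ_proper : ∃ u, Ψ u ≠ ⊤)
    (hΨ_convex : ∀ u v : H, ∀ a b : ℝ, 0 ≤ a → 0 ≤ b → a + b = 1 →
      Ψ (a • u + b • v) ≤ (a : EReal) * Ψ u + (b : EReal) * Ψ v)
    (hΦ_convex : ConvexOn ℝ Set.univ Φ) (hΦ_diff : ∀ u, HasGradientAt Φ (Φ' u) u)
    (hΦ_lip : LipschitzWith L Φ') (hα : 0 < α) (hs : 0 < s) (hsL : s * L ≤ 1) {x y : ℕ → H}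
    (hy : ∀ k : ℕ, 1 ≤ k →
      y k = x k + (((k : ℝ) - 1) / ((k : ℝ) + α - 1)) • (x k - x (k - 1)))
    (hx : ∀ k : ℕ, 1 ≤ k → ∀ u : H,
      Ψ (x (k + 1)) + ((1 / (2 * s) * ‖x (k + 1) - (y k - s • Φ' (y k))‖ ^ 2 : ℝ) : EReal)
        ≤ Ψ u + ((1 / (2 * s) * ‖u - (y k - s • Φ' (y k))‖ ^ 2 : ℝ) : EReal))
    {xstar : H} (hxstar : ∀ u, Ψ xstar + (Φ xstar : EReal) ≤ Ψ u + (Φ u : EReal))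
    {k : ℕ} (hk : 1 ≤ k) :
    ‖x (k + 1) - xstar‖ ^ 2 ≤ ‖x k - xstar‖ ^ 2 + 2 * ‖x k - x (k - 1)‖ ^ 2 +
      (((k : ℝ) - 1) / ((k : ℝ) + α - 1)) * (‖x k - xstar‖ ^ 2 - ‖x (k - 1) - xstar‖ ^ 2) := by
  let proxTerm : H → ℝ := fun u => 1 / (2 * s) * ‖u - (y k - s • Φ' (y k))‖ ^ 2
  have hx_dom := mem_effectiveDomain_of_forall_add_coe_le (c := proxTerm) hΨ_proper (hx k hk)
  have hxstar_dom := mem_effectiveDomain_of_forall_add_coe_le hΨ_proper hxstar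
  have hfejer : ‖x (k + 1) - xstar‖ ≤ ‖y k - xstar‖ :=
    forwardBackward_norm_sub_minimizer_le (convexOn_toReal_effectiveDomain hΨ_ne_bot hΨ_convex)
      hΦ_convex hΦ_diff hΦ_lip hs hsL hx_dom
      (isMinOn_effectiveDomain_of_forall_add_coe_le hΨ_ne_bot hx_dom (hx k hk)) hxstar_dom
      (isMinOn_effectiveDomain_of_forall_add_coe_le hΨ_ne_bot hxstar_dom hxstar)
  have hγ := inertial_coefficient_mem_Icc hα.le (Nat.one_le_cast.2 hk : (1 : ℝ) ≤ k)
  have hsq := pow_le_pow_left₀ (norm_nonneg _) hfejer 2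
  rw [hy k hk, norm_extrapolation_sub_sq] at hsq
  refine hsq.trans ?_
  gcongr
  linarith [pow_le_one₀ (n := 2) hγ.1 hγ.2, hγ.2]

/-- `‖x_{k+1}-x*‖² ≤ ‖x_k-x*‖² + 2‖x_k-x_{k-1}‖² + ((k-1)/(k+α-1))(‖x_k-x*‖²-‖x_{k-1}-x*‖²)`. -/
theorem fista_anchor_inequality
    {H : Type*} [NormedAddCommGroup H] [InnerProductSpace ℝ H] [CompleteSpace H]
    (Ψ : H → EReal) (Φ : H → ℝ) (Φ' : H → H) (L s α : ℝ)
    (hΨ_ne_bot : ∀ u, Ψ u ≠ ⊥) (hΨ_proper : ∃ u, Ψ u ≠ ⊤)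
    (hΨ_lsc : LowerSemicontinuous Ψ)
    (hΨ_convex : ∀ u v : H, ∀ a b : ℝ, 0 ≤ a → 0 ≤ b → a + b = 1 →
      Ψ (a • u + b • v) ≤ (a : EReal) * Ψ u + (b : EReal) * Ψ v)
    (hΦ_convex : ConvexOn ℝ Set.univ Φ)
    (hΦ_diff : ∀ u, HasGradientAt Φ (Φ' u) u)
    (hΦ_lip : LipschitzWith (Real.toNNReal L) Φ')
    (hα : 3 < α) (hs : 0 < s) (hsL : s < 1 / L)
    (x y : ℕ → H)
    (hy : ∀ k : ℕ, 1 ≤ k →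
      y k = x k + (((k : ℝ) - 1) / ((k : ℝ) + α - 1)) • (x k - x (k - 1)))
    (hx : ∀ k : ℕ, 1 ≤ k → ∀ u : H,
      Ψ (x (k + 1)) + ((1 / (2 * s) * ‖x (k + 1) - (y k - s • Φ' (y k))‖ ^ 2 : ℝ) : EReal)
        ≤ Ψ u + ((1 / (2 * s) * ‖u - (y k - s • Φ' (y k))‖ ^ 2 : ℝ) : EReal))
    (xstar : H)
    (hxstar : ∀ u, Ψ xstar + (Φ xstar : EReal) ≤ Ψ u + (Φ u : EReal)) :
    ∀ k : ℕ, 1 ≤ k →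
      ‖x (k + 1) - xstar‖ ^ 2 ≤ ‖x k - xstar‖ ^ 2 + 2 * ‖x k - x (k - 1)‖ ^ 2 +
        (((k : ℝ) - 1) / ((k : ℝ) + α - 1)) * (‖x k - xstar‖ ^ 2 - ‖x (k - 1) - xstar‖ ^ 2) := by
  have hL : 0 < L := one_div_pos.1 (hs.trans hsL)
  exact fun k => fista_anchor_inequality_general hΨ_ne_bot hΨ_proper hΨ_convex hΦ_convex hΦ_diff
    hΦ_lip (by linarith) hs (by simpa [hL.le] using ((lt_div_iff₀ hL).1 hsL).le) hy hx hxstar
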